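/- arXiv:1710.03625 — 2 statements merged into one kernel-verified Lean document; each statement's English description precedes it below -/
import Mathlib

section
/- In the setting of the constrained problem (P) with C ⊆ Y a closed convex cone with apex at the origin, assume all hypotheses of the solvability theorem: Y reflexive, x₀ ∈ g⁻¹(C), c > 0, φ, g of class C^{1,1} on int B(x₀, r₀), DF_{x₀}(x₀) surjective onto ℝ × Y, reg(F_{x₀}, x₀)·lip(DF_{x₀}, int B(x₀, r₀))/8 < c, and S ∈ U_c(X) with x₀ ∈ int S ⊆ B(x₀, ρ) and F_{x₀}(S) closed (ρ as given by that theorem). Then the Lagrangian duality gap vanishes, inf_{x ∈ S} sup_{y* ∈ C⊖} L(y*, x) = sup_{y* ∈ C⊖} inf_{x ∈ S} L(y*, x), and there exists a pair (y*_S, x̄_S) ∈ C⊖ × (S ∩ g⁻¹(C)) which is a saddle point of L: L(y*, x̄_S) ≤ L(y*_S, x̄_S) ≤ L(y*_S, x) for all y* ∈ C⊖ and all x ∈ S. -/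
open Metric Set
open scoped NNReal ENNReal

/-- The modulus of convexity of a set `S` in a real normed space:
`δ_S(ε) = sup{δ ≥ 0 : B((x₁+x₂)/2, δ) ⊆ S for all x₁, x₂ ∈ S with ‖x₁ − x₂‖ = ε}`. -/
noncomputable def setModulus {X : Type*} [NormedAddCommGroup X] [NormedSpace ℝ X]
    (S : Set X) (ε : ℝ) : ℝ :=
  sSup {δ : ℝ | 0 ≤ δ ∧ ∀ x₁ ∈ S, ∀ x₂ ∈ S, ‖x₁ - x₂‖ = ε →
    closedBall (midpoint ℝ x₁ x₂) δ ⊆ S}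

/-- The exact bound of Lipschitz continuity of `h` on `U`:
the infimum of all Lipschitz constants of `h` on `U`. -/
noncomputable def lipOn {α β : Type*} [PseudoMetricSpace α] [PseudoMetricSpace β]
    (h : α → β) (U : Set α) : ℝ :=
  sInf {ℓ : ℝ | 0 ≤ ℓ ∧ ∀ x₁ ∈ U, ∀ x₂ ∈ U, dist (h x₁) (h x₂) ≤ ℓ * dist x₁ x₂}

/-- The exact regularity bound of `f` around `x₀`: the infimum of all `κ ≥ 0` such that,
for some `δ > 0`, `dist(x, f⁻¹(y)) ≤ κ‖y − f(x)‖` for all `x ∈ B(x₀, δ)`, `y ∈ B(f(x₀), δ)`;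
it equals `+∞` when `f` is not metrically regular around `x₀`. -/
noncomputable def regBound {X Y : Type*} [NormedAddCommGroup X] [NormedAddCommGroup Y]
    (f : X → Y) (x₀ : X) : ℝ≥0∞ :=
  sInf (ENNReal.ofReal '' {κ : ℝ | 0 ≤ κ ∧ ∃ δ > 0,
    ∀ x ∈ closedBall x₀ δ, ∀ y ∈ closedBall (f x₀) δ,
      Metric.infDist x {x' | f x' = y} ≤ κ * ‖y - f x‖})

/-- `S ∈ U_c(X)`: `S` is a nonempty closed convex set whose modulus of convexity
satisfies `δ_S(ε) ≥ cε²` for all `ε ∈ (0, diam S)`. -/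
def UniformlyConvexWith {X : Type*} [NormedAddCommGroup X] [NormedSpace ℝ X]
    (c : ℝ) (S : Set X) : Prop :=
  S.Nonempty ∧ IsClosed S ∧ Convex ℝ S ∧
    ∀ ε : ℝ, 0 < ε → ε < Metric.diam S → c * ε ^ 2 ≤ setModulus S ε

/-- The modulus of convexity of a normed space
`δ_X(ε) = inf{1 − ‖(x₁+x₂)/2‖ : x₁, x₂ ∈ B̄(0,1), ‖x₁ − x₂‖ = ε}`. -/
noncomputable def spaceModulus (X : Type*) [NormedAddCommGroup X] [NormedSpace ℝ X]
    (ε : ℝ) : ℝ :=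
  sInf {d : ℝ | ∃ x₁ ∈ closedBall (0 : X) 1, ∃ x₂ ∈ closedBall (0 : X) 1,
    ‖x₁ - x₂‖ = ε ∧ d = 1 - ‖midpoint ℝ x₁ x₂‖}

/-- `S` is `r`-convex (strongly convex of radius `r`): a nonempty intersection
`⋂_{x ∈ M} B̄(x, r)` for some `M ⊊ X`. -/
def RConvex {X : Type*} [NormedAddCommGroup X] (r : ℝ) (S : Set X) : Prop :=
  S.Nonempty ∧ ∃ M : Set X, M ≠ Set.univ ∧ S = ⋂ x ∈ M, closedBall x r

/-- `f` is open at a linear rate around `x₀`. -/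
def OpenAtLinearRate {X Y : Type*} [PseudoMetricSpace X] [PseudoMetricSpace Y]
    (f : X → Y) (x₀ : X) : Prop :=
  ∃ δ > (0 : ℝ), ∃ ζ > (0 : ℝ), ∃ σ > (0 : ℝ), ∀ x ∈ closedBall x₀ δ, ∀ r ∈ Icc (0 : ℝ) δ,
    closedBall (f x) (σ * r) ∩ closedBall (f x₀) ζ ⊆ f '' closedBall x r

open Filter
open scoped Topology

/-!
Near `x₀` the map `F = (φ - φ x₀, g)` is metrically regular with some constant `κ`, and by Taylor's
formula it maps midpoints to midpoints up to an error of `L/8 ‖x₁ - x₂‖²`, where `L` is the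
Lipschitz constant of its derivative. As soon as `κ L / 8 < c`, a small ball around the midpoint of
`F x₁` and `F x₂` is therefore covered by the images of the points within `c ‖x₁ - x₂‖²` of the
midpoint of `x₁` and `x₂`, so `F '' S` inherits strong convexity from `S`.

Strong convexity of `F '' S` makes Cauchy every sequence in it with second coordinates in `C` whose
first coordinates tend to their infimum, and its limit is the image of a solution. By openness of
`F`, the point `F x₀` is interior to `F '' S`; it serves as a Slater point for the separation of
`F '' S` from the points with a smaller first coordinate and a second coordinate in `C`. The
separating functional is the multiplier, and the solution and the multiplier form the saddle point.
-/

/-- The set `K` is strongly convex at midpoints with constant `σ`. For closed, bounded and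
convex `K` it corresponds to `δ_K(ε) ≥ σ ε²`; being stated pointwise, it can be checked without
attaining a supremum and before `K` is known to be closed or convex. -/
def MidpointStronglyConvex {Z : Type*} [NormedAddCommGroup Z] [NormedSpace ℝ Z]
    (σ : ℝ) (K : Set Z) : Prop :=
  ∀ y₁ ∈ K, ∀ y₂ ∈ K, closedBall (midpoint ℝ y₁ y₂) (σ * ‖y₁ - y₂‖ ^ 2) ⊆ K

section UniformlyConvexSets

variable {X : Type*} [NormedAddCommGroup X] [NormedSpace ℝ X] {S : Set X} {c : ℝ} {x₁ x₂ : X}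

lemma closedBall_midpoint_subset_of_lt_setModulus {d : ℝ} (hd : d < setModulus S ‖x₁ - x₂‖)
    (h₁ : x₁ ∈ S) (h₂ : x₂ ∈ S) : closedBall (midpoint ℝ x₁ x₂) d ⊆ S := by
  rcases lt_or_ge d 0 with hneg | hnonneg
  · simp only [closedBall_eq_empty.2 hneg, empty_subset]
  have hne : {δ : ℝ | 0 ≤ δ ∧ ∀ y₁ ∈ S, ∀ y₂ ∈ S, ‖y₁ - y₂‖ = ‖x₁ - x₂‖ →
      closedBall (midpoint ℝ y₁ y₂) δ ⊆ S}.Nonempty := by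
    by_contra hempty
    rw [setModulus, not_nonempty_iff_eq_empty.1 hempty, Real.sSup_empty] at hd
    exact absurd hd hnonneg.not_gt
  obtain ⟨δ, ⟨-, hδ⟩, hdδ⟩ := exists_lt_of_lt_csSup hne hd
  exact (closedBall_subset_closedBall hdδ.le).trans (hδ x₁ h₁ x₂ h₂ rfl)

/- The modulus inequality says nothing at `ε = diam S`, so it is applied to the segment obtained
by shrinking `[x₁, x₂]` slightly towards its midpoint. -/
lemma UniformlyConvexWith.ball_midpoint_subset (hS : UniformlyConvexWith c S)
    (hb : Bornology.IsBounded S) (h₁ : x₁ ∈ S) (h₂ : x₂ ∈ S) :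
    ball (midpoint ℝ x₁ x₂) (c * ‖x₁ - x₂‖ ^ 2) ⊆ S := by
  intro y hy
  rw [mem_ball] at hy
  obtain ⟨-, -, hconv, hmod⟩ := hS
  set m := midpoint ℝ x₁ x₂
  have hpos : 0 < ‖x₁ - x₂‖ := by
    refine (norm_nonneg _).lt_of_ne' fun h => ?_
    rw [h] at hy
    linarith [dist_nonneg (x := y) (y := m)]
  obtain ⟨t, hyt, ht0, ht1⟩ :
      ∃ t : ℝ, dist y m < c * (t * ‖x₁ - x₂‖) ^ 2 ∧ 0 < t ∧ t < 1 := by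
    have hcont : Continuous fun t : ℝ => c * (t * ‖x₁ - x₂‖) ^ 2 := by fun_prop
    have hlt : ∀ᶠ t in 𝓝[<] (1 : ℝ), dist y m < c * (t * ‖x₁ - x₂‖) ^ 2 :=
      (hcont.tendsto' 1 _ (by rw [one_mul])).mono_left nhdsWithin_le_nhds |>.eventually_const_lt hy
    exact (hlt.and (Ioo_mem_nhdsLT one_pos)).exists
  have hm : m ∈ S := hconv.midpoint_mem h₁ h₂
  have hmem : ∀ x ∈ S, AffineMap.homothety m t x ∈ S := fun x hx => by
    rw [AffineMap.homothety_eq_lineMap]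
    exact hconv.lineMap_mem hm hx ⟨ht0.le, ht1.le⟩
  have hnorm : ‖AffineMap.homothety m t x₁ - AffineMap.homothety m t x₂‖ = t * ‖x₁ - x₂‖ := by
    rw [← vsub_eq_sub, ← AffineMap.linearMap_vsub, AffineMap.homothety_linear, LinearMap.smul_apply,
      LinearMap.id_apply, norm_smul, Real.norm_of_nonneg ht0.le, vsub_eq_sub]
  have hmid : midpoint ℝ (AffineMap.homothety m t x₁) (AffineMap.homothety m t x₂) = m := by
    rw [← AffineMap.map_midpoint, AffineMap.homothety_apply_same]
  have hdiam : t * ‖x₁ - x₂‖ < diam S :=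
    (mul_lt_of_lt_one_left hpos ht1).trans_le <|
      (dist_eq_norm x₁ x₂).symm.trans_le (dist_le_diam_of_mem hb h₁ h₂)
  have hlt : dist y m < setModulus S ‖AffineMap.homothety m t x₁ - AffineMap.homothety m t x₂‖ := by
    rw [hnorm]
    exact hyt.trans_le (hmod _ (by positivity) hdiam)
  have hsub := closedBall_midpoint_subset_of_lt_setModulus hlt (hmem x₁ h₁) (hmem x₂ h₂)
  rw [hmid] at hsub
  exact hsub (mem_closedBall.2 le_rfl)

lemma UniformlyConvexWith.midpointStronglyConvex (hS : UniformlyConvexWith c S)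
    (hb : Bornology.IsBounded S) : MidpointStronglyConvex c S := by
  intro x₁ h₁ x₂ h₂
  have hball := hS.ball_midpoint_subset hb h₁ h₂
  obtain ⟨-, hclosed, hconv, -⟩ := hS
  rcases eq_or_ne (c * ‖x₁ - x₂‖ ^ 2) 0 with h | h
  · rw [h, closedBall_zero, singleton_subset_iff]
    exact hconv.midpoint_mem h₁ h₂
  · rw [← closure_ball _ h]
    exact closure_minimal hball hclosed

end UniformlyConvexSets

section ClosedMidpointConvex

lemma Icc_subset_of_isClosed_of_midpoint_mem {T : Set ℝ} (hT : IsClosed T)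
    (hmid : ∀ s ∈ T, ∀ t ∈ T, midpoint ℝ s t ∈ T) {a b : ℝ} (ha : a ∈ T) (hb : b ∈ T) :
    Icc a b ⊆ T := by
  intro t ht
  by_contra htT
  -- A missing point lies in a maximal gap of `T`, whose midpoint would have to belong to `T`.
  obtain ⟨l, ⟨hlT, -, hlt⟩, hl⟩ := (isCompact_Icc.inter_left hT).exists_isGreatest
    (⟨a, ha, left_mem_Icc.2 ht.1⟩ : (T ∩ Icc a t).Nonempty)
  obtain ⟨u, ⟨huT, htu, -⟩, hu⟩ := (isCompact_Icc.inter_left hT).exists_isLeast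
    (⟨b, hb, right_mem_Icc.2 ht.2⟩ : (T ∩ Icc t b).Nonempty)
  have hlt' : l < t := hlt.lt_of_ne (ne_of_mem_of_not_mem hlT htT)
  have htu' : t < u := htu.lt_of_ne (ne_of_mem_of_not_mem huT htT).symm
  have hlm : l < midpoint ℝ l u := (lt_iff_lt_of_le_iff_le midpoint_le_left).2 (hlt'.trans htu')
  have hmu : midpoint ℝ l u < u := (lt_iff_lt_of_le_iff_le right_le_midpoint).2 (hlt'.trans htu')
  rcases le_total (midpoint ℝ l u) t with h | h
  · exact hlm.not_ge (hl ⟨hmid l hlT u huT, (hl ⟨ha, left_mem_Icc.2 ht.1⟩).trans hlm.le, h⟩)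
  · exact hmu.not_ge (hu ⟨hmid l hlT u huT, h, hmu.le.trans (hu ⟨hb, right_mem_Icc.2 ht.2⟩)⟩)

lemma convex_of_isClosed_of_midpoint_mem {E : Type*} [AddCommGroup E] [Module ℝ E]
    [TopologicalSpace E] [IsTopologicalAddGroup E] [ContinuousSMul ℝ E] {K : Set E}
    (hK : IsClosed K) (hmid : ∀ y₁ ∈ K, ∀ y₂ ∈ K, midpoint ℝ y₁ y₂ ∈ K) : Convex ℝ K := by
  rw [convex_iff_segment_subset]
  intro x hx y hy
  rw [segment_eq_image_lineMap, image_subset_iff]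
  refine Icc_subset_of_isClosed_of_midpoint_mem (hK.preimage AffineMap.lineMap_continuous)
    (fun s hs t ht => ?_) ?_ ?_
  · rw [mem_preimage, AffineMap.map_midpoint]
    exact hmid _ hs _ ht
  · rwa [mem_preimage, AffineMap.lineMap_apply_zero]
  · rwa [mem_preimage, AffineMap.lineMap_apply_one]

lemma MidpointStronglyConvex.convex {Z : Type*} [NormedAddCommGroup Z] [NormedSpace ℝ Z]
    {σ : ℝ} {K : Set Z} (hK : MidpointStronglyConvex σ K) (hσ : 0 ≤ σ) (hcl : IsClosed K) :
    Convex ℝ K :=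
  convex_of_isClosed_of_midpoint_mem hcl fun y₁ h₁ y₂ h₂ =>
    hK y₁ h₁ y₂ h₂ (mem_closedBall_self (by positivity))

end ClosedMidpointConvex

section Taylor

variable {X Z : Type*} [NormedAddCommGroup X] [NormedSpace ℝ X]
  [NormedAddCommGroup Z] [NormedSpace ℝ Z] {f : X → Z} {f' : X → X →L[ℝ] Z} {s : Set X}
  {K : ℝ≥0} {x y : X}

lemma norm_sub_sub_fderivWithin_le (hs : Convex ℝ s)
    (hf : ∀ z ∈ s, HasFDerivWithinAt f (f' z) s z) (hK : LipschitzOnWith K f' s)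
    (hx : x ∈ s) (hy : y ∈ s) :
    ‖f y - f x - f' x (y - x)‖ ≤ K / 2 * ‖y - x‖ ^ 2 := by
  set γ : ℝ → X := ⇑(AffineMap.lineMap x y : ℝ →ᵃ[ℝ] X)
  have hγ : MapsTo γ (Icc 0 1) s := fun t ht => hs.lineMap_mem hx hy ht
  have hder : ∀ t ∈ Icc (0 : ℝ) 1, HasDerivWithinAt (fun t => f (γ t) - f x - t • f' x (y - x))
      (f' (γ t) (y - x) - f' x (y - x)) (Icc 0 1) t := fun t ht => by
    have hγ' : HasDerivWithinAt γ (y - x) (Icc 0 1) t := AffineMap.hasDerivWithinAt_lineMap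
    exact ((((hf _ (hγ ht)).comp_hasDerivWithinAt t hγ' hγ).sub_const (f x)).sub
      ((hasDerivWithinAt_id t _).smul_const (f' x (y - x)))).congr_deriv (by rw [one_smul])
  have hbound : ∀ t ∈ Ico (0 : ℝ) 1,
      ‖f' (γ t) (y - x) - f' x (y - x)‖ ≤ K / 2 * ‖y - x‖ ^ 2 * (2 * t) := by
    intro t ht
    calc ‖f' (γ t) (y - x) - f' x (y - x)‖
        ≤ ‖f' (γ t) - f' x‖ * ‖y - x‖ := (f' (γ t) - f' x).le_opNorm (y - x)
      _ ≤ K * (t * ‖y - x‖) * ‖y - x‖ := by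
          gcongr
          have hdist := hK.norm_sub_le (hγ (Ico_subset_Icc_self ht)) hx
          rwa [← dist_eq_norm (γ t), dist_lineMap_left, Real.norm_of_nonneg ht.1, dist_comm,
            dist_eq_norm] at hdist
      _ = K / 2 * ‖y - x‖ ^ 2 * (2 * t) := by ring
  have hmain := image_norm_le_of_norm_deriv_right_le_deriv_boundary
    (fun t ht => (hder t ht).continuousWithinAt)
    (fun t ht => (hder t (Ico_subset_Icc_self ht)).mono_of_mem_nhdsWithin
      (Icc_mem_nhdsGE_of_mem ht))
    (B := fun t => K / 2 * ‖y - x‖ ^ 2 * t ^ 2) (by simp [γ])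
    (fun t => by simpa using (hasDerivAt_pow 2 t).const_mul (K / 2 * ‖y - x‖ ^ 2))
    hbound (right_mem_Icc.2 zero_le_one)
  simpa [γ] using hmain

lemma norm_midpoint_sub_map_midpoint_le (hs : Convex ℝ s)
    (hf : ∀ z ∈ s, HasFDerivWithinAt f (f' z) s z) (hK : LipschitzOnWith K f' s)
    (hx : x ∈ s) (hy : y ∈ s) :
    ‖midpoint ℝ (f x) (f y) - f (midpoint ℝ x y)‖ ≤ K / 8 * ‖x - y‖ ^ 2 := by
  set m := midpoint ℝ x y
  have hm : m ∈ s := hs.midpoint_mem hx hy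
  have hlin : f' m (x - m) + f' m (y - m) = 0 := by
    have hxy : x - m + (y - m) = 0 := by
      simp only [m, midpoint_eq_smul_add, invOf_eq_inv]
      module
    rw [← map_add, hxy, map_zero]
  have hsplit : midpoint ℝ (f x) (f y) - f m =
      (2⁻¹ : ℝ) • ((f x - f m - f' m (x - m)) + (f y - f m - f' m (y - m))) := by
    rw [midpoint_eq_smul_add, invOf_eq_inv, sub_add_sub_comm _ (f' m (x - m)), hlin]
    module
  have hxm : ‖x - m‖ = 2⁻¹ * ‖x - y‖ := by
    rw [← dist_eq_norm, dist_left_midpoint, Real.norm_ofNat, dist_eq_norm]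
  have hym : ‖y - m‖ = 2⁻¹ * ‖x - y‖ := by
    rw [← dist_eq_norm, dist_right_midpoint, Real.norm_ofNat, dist_eq_norm]
  have hTx := norm_sub_sub_fderivWithin_le hs hf hK hm hx
  have hTy := norm_sub_sub_fderivWithin_le hs hf hK hm hy
  rw [hxm] at hTx
  rw [hym] at hTy
  calc ‖midpoint ℝ (f x) (f y) - f m‖
      ≤ 2⁻¹ * (‖f x - f m - f' m (x - m)‖ + ‖f y - f m - f' m (y - m)‖) := by
        rw [hsplit, norm_smul, norm_inv, Real.norm_ofNat]
        gcongr
        exact norm_add_le _ _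
    _ ≤ K / 8 * ‖x - y‖ ^ 2 := by linarith

end Taylor

section C11

variable {E F G : Type*} [NormedAddCommGroup E] [NormedSpace ℝ E] [NormedAddCommGroup F]
  [NormedSpace ℝ F] [NormedAddCommGroup G] [NormedSpace ℝ G] {f : E → F} {g : E → G} {U : Set E}

/-- The function `f` is of class `C^{1,1}` on `U`: it is differentiable at the points of `U` and its
derivative is Lipschitz continuous on `U`. As `fderiv` is taken in the whole space, this is the
usual notion for open `U`. -/
def C11On (f : E → F) (U : Set E) : Prop :=
  (∀ x ∈ U, DifferentiableAt ℝ f x) ∧ ∃ K : ℝ≥0, LipschitzOnWith K (fderiv ℝ f) U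

lemma C11On.sub_const (hf : C11On f U) (b : F) : C11On (fun x => f x - b) U := by
  obtain ⟨hdiff, K, hK⟩ := hf
  refine ⟨fun x hx => (hdiff x hx).sub_const b, K, ?_⟩
  rwa [show fderiv ℝ (fun x => f x - b) = fderiv ℝ f from funext fun _ => fderiv_sub_const b]

lemma C11On.prodMk (hf : C11On f U) (hg : C11On g U) : C11On (fun x => (f x, g x)) U := by
  obtain ⟨hfdiff, Kf, hKf⟩ := hf
  obtain ⟨hgdiff, Kg, hKg⟩ := hg
  refine ⟨fun x hx => (hfdiff x hx).prodMk (hgdiff x hx), max Kf Kg, ?_⟩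
  intro x hx y hy
  rw [(hfdiff x hx).fderiv_prodMk (hgdiff x hx), (hfdiff y hy).fderiv_prodMk (hgdiff y hy)]
  have hiso : Isometry (ContinuousLinearMap.prodₗᵢ ℝ : (E →L[ℝ] F) × (E →L[ℝ] G) ≃ₗᵢ[ℝ] _) :=
    LinearIsometryEquiv.isometry _
  exact (hiso.edist_eq (fderiv ℝ f x, fderiv ℝ g x) (fderiv ℝ f y, fderiv ℝ g y)).trans_le
    (hKf.prodMk hKg hx hy)

lemma C11On.hasStrictFDerivAt (hf : C11On f U) {x : E} (hx : U ∈ 𝓝 x) :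
    HasStrictFDerivAt f (fderiv ℝ f x) x := by
  obtain ⟨hdiff, K, hK⟩ := hf
  exact hasStrictFDerivAt_of_hasFDerivAt_of_continuousAt
    (mem_of_superset hx fun y hy => (hdiff y hy).hasFDerivAt) (hK.continuousOn.continuousAt hx)

end C11

lemma lipschitzOnWith_lipOn {α β : Type*} [PseudoMetricSpace α] [PseudoMetricSpace β] {f : α → β}
    {U : Set α} (hf : ∃ K : ℝ≥0, LipschitzOnWith K f U) :
    LipschitzOnWith (lipOn f U).toNNReal f U := by
  obtain ⟨K, hK⟩ := hf
  have hne : {ℓ : ℝ | 0 ≤ ℓ ∧ ∀ x ∈ U, ∀ y ∈ U, dist (f x) (f y) ≤ ℓ * dist x y}.Nonempty :=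
    ⟨K, K.coe_nonneg, hK.dist_le_mul⟩
  refine LipschitzOnWith.of_dist_le_mul fun x hx y hy => ?_
  rw [lipOn, Real.coe_toNNReal _ (Real.sInf_nonneg fun _ hℓ => hℓ.1)]
  rcases (dist_nonneg (x := x) (y := y)).eq_or_lt' with h | h
  · simpa only [h, mul_zero] using hK.dist_le_mul x hx y hy
  · rw [← div_le_iff₀ h]
    exact le_csInf hne fun ℓ hℓ => (div_le_iff₀ h).2 (hℓ.2 x hx y hy)

section MetricRegularity

/-- The map `f` is metrically regular at `x₀` with constant `κ`. The distance to the fibre is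
`infEDist`, so an empty fibre is infinitely far away; for `infDist` it would be at distance `0`. -/
def MetricallyRegularAt {α β : Type*} [PseudoEMetricSpace α] [PseudoEMetricSpace β]
    (f : α → β) (x₀ : α) (κ : ℝ≥0) : Prop :=
  ∀ᶠ p in 𝓝 (x₀, f x₀), infEDist p.1 (f ⁻¹' {p.2}) ≤ κ * edist p.2 (f p.1)

variable {X Z : Type*} [NormedAddCommGroup X] [NormedAddCommGroup Z] {F : X → Z} {x₀ : X}

lemma MetricallyRegularAt.regBound_le {κ : ℝ≥0} (h : MetricallyRegularAt F x₀ κ) :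
    regBound F x₀ ≤ κ := by
  obtain ⟨δ, hδ, hreg⟩ := nhds_basis_closedBall.eventually_iff.1 h
  refine sInf_le ⟨κ, ⟨κ.coe_nonneg, δ, hδ, fun x hx y hy => ?_⟩, ENNReal.ofReal_coe_nnreal⟩
  refine ENNReal.toReal_le_of_le_ofReal (by positivity) ?_
  rw [ENNReal.ofReal_mul κ.coe_nonneg, ENNReal.ofReal_coe_nnreal, ← dist_eq_norm, ← edist_dist]
  exact hreg (x := (x, y)) (by rw [← closedBall_prod_same]; exact ⟨hx, hy⟩)

lemma exists_metricallyRegularAt_of_regBound_lt (hF : range F ∈ 𝓝 (F x₀)) {a : ℝ≥0∞}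
    (ha : regBound F x₀ < a) : ∃ κ : ℝ≥0, κ < a ∧ MetricallyRegularAt F x₀ κ := by
  obtain ⟨_, ⟨κ, ⟨hκ, δ, hδ, hreg⟩, rfl⟩, hκa⟩ := sInf_lt_iff.1 ha
  refine ⟨κ.toNNReal, hκa, ?_⟩
  filter_upwards [prod_mem_nhds (closedBall_mem_nhds x₀ hδ)
    (inter_mem (closedBall_mem_nhds (F x₀) hδ) hF)]
  rintro ⟨x, y⟩ ⟨hx, hy, hyF⟩
  have hne : (F ⁻¹' {y}).Nonempty := hyF
  calc infEDist x (F ⁻¹' {y})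
      = ENNReal.ofReal (infDist x (F ⁻¹' {y})) := (ENNReal.ofReal_toReal (infEDist_ne_top hne)).symm
    _ ≤ ENNReal.ofReal (κ * ‖y - F x‖) := ENNReal.ofReal_le_ofReal (hreg x hx y hy)
    _ = ENNReal.ofReal κ * edist y (F x) := by
        rw [ENNReal.ofReal_mul hκ, ← dist_eq_norm, ← edist_dist]

variable [NormedSpace ℝ X] [NormedSpace ℝ Z] [CompleteSpace X] [CompleteSpace Z] {F' : X →L[ℝ] Z}

/- Lyusternik–Graves: the modified Newton iteration built from a right inverse of `F'` solves
`F x' = p.2` starting from `p.1`. -/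
lemma exists_metricallyRegularAt_of_surjective (hF : HasStrictFDerivAt F F' x₀)
    (hF' : Function.Surjective F') : ∃ κ : ℝ≥0, MetricallyRegularAt F x₀ κ := by
  obtain ⟨R, hR⟩ := F'.exists_nonlinearRightInverse_of_surjective (LinearMap.range_eq_top.2 hF')
  obtain ⟨q, hq0, hqR⟩ := exists_between (inv_pos.2 hR)
  obtain ⟨s, hs, happrox⟩ := hF.approximates_deriv_on_nhds (Or.inr hq0)
  obtain ⟨δ, hδ, hδs⟩ := nhds_basis_closedBall.mem_iff.1 hs
  set a : ℝ := (R.nnnorm : ℝ)⁻¹ - q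
  have ha : 0 < a := sub_pos.2 (by exact_mod_cast hqR)
  refine ⟨a⁻¹.toNNReal, ?_⟩
  have hcont : ContinuousAt (fun p : X × Z => a⁻¹ * dist p.2 (F p.1) + dist p.1 x₀) (x₀, F x₀) := by
    have := hF.continuousAt
    fun_prop (disch := assumption)
  filter_upwards [hcont.eventually_le_const (by simpa using hδ)]
  rintro ⟨x, y⟩ hxy
  obtain ⟨x', hx', hx'y⟩ := happrox.surjOn_closedBall_of_nonlinearRightInverse R
    (ε := a⁻¹ * dist y (F x)) (by positivity) ((closedBall_subset_closedBall' hxy).trans hδs)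
    (show y ∈ _ by rw [mem_closedBall, mul_inv_cancel_left₀ ha.ne'])
  calc infEDist x (F ⁻¹' {y}) ≤ edist x x' := infEDist_le_edist_of_mem hx'y
    _ ≤ ENNReal.ofReal (a⁻¹ * dist y (F x)) := by
        rw [edist_comm, edist_dist]
        exact ENNReal.ofReal_le_ofReal hx'
    _ = a⁻¹.toNNReal * edist y (F x) := by
        rw [ENNReal.ofReal_mul (by positivity), ← edist_dist, ENNReal.ofReal]

lemma exists_metricallyRegularAt_of_regBound_mul_lt
    (hF : HasStrictFDerivAt F F' x₀) (hF' : Function.Surjective F') {K : ℝ≥0} {c : ℝ}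
    (hc : regBound F x₀ * K / 8 < ENNReal.ofReal c) :
    ∃ κ : ℝ≥0, κ * K / 8 < c ∧ MetricallyRegularAt F x₀ κ := by
  obtain ⟨_, hκ₀⟩ := exists_metricallyRegularAt_of_surjective hF hF'
  have htop : regBound F x₀ < ⊤ := hκ₀.regBound_le.trans_lt ENNReal.coe_lt_top
  have hrange : range F ∈ 𝓝 (F x₀) := by
    rw [← hF.map_nhds_eq_of_surj (LinearMap.range_eq_top.2 hF')]
    exact range_mem_map
  have hcont : Tendsto (fun t : ℝ≥0∞ => t * K / 8) (𝓝 (regBound F x₀))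
      (𝓝 (regBound F x₀ * K / 8)) :=
    ENNReal.Tendsto.div_const (ENNReal.Tendsto.mul_const tendsto_id (Or.inr ENNReal.coe_ne_top))
      (Or.inr (by norm_num))
  have := nhdsGT_neBot_of_exists_gt ⟨⊤, htop⟩
  obtain ⟨t, htc, ht⟩ := ((hcont.mono_left nhdsWithin_le_nhds).eventually_lt_const hc |>.and
    (self_mem_nhdsWithin : Ioi (regBound F x₀) ∈ 𝓝[>] _)).exists
  obtain ⟨κ, hκt, hκ⟩ := exists_metricallyRegularAt_of_regBound_lt hrange ht
  refine ⟨κ, ?_, hκ⟩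
  have hκc : (κ : ℝ≥0∞) * K / 8 < ENNReal.ofReal c := lt_of_le_of_lt (by gcongr) htc
  have hcoe : ((κ * K / 8 : ℝ≥0) : ℝ≥0∞) < c.toNNReal := by
    rwa [ENNReal.coe_div (by norm_num), ENNReal.coe_mul]
  exact_mod_cast Real.lt_toNNReal_iff_coe_lt.1 (ENNReal.coe_lt_coe.1 hcoe)

end MetricRegularity

section Image

variable {X Z : Type*} [NormedAddCommGroup X] [NormedSpace ℝ X] [NormedAddCommGroup Z]
  [NormedSpace ℝ Z] {F : X → Z} {S : Set X} {c σ : ℝ} {κ : ℝ≥0}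

/- A point `y` of the small ball is within `(a + σ M²) ‖x₁ - x₂‖²` of `F (midpoint x₁ x₂)`, and
regularity turns this into a solution of `F x' = y` within `c ‖x₁ - x₂‖²` of `midpoint x₁ x₂`. -/
lemma MidpointStronglyConvex.image {M : ℝ≥0} {a : ℝ} (hS : MidpointStronglyConvex c S)
    (hσ : 0 ≤ σ) (hM : LipschitzOnWith M F S)
    (ha : ∀ x₁ ∈ S, ∀ x₂ ∈ S,
      ‖midpoint ℝ (F x₁) (F x₂) - F (midpoint ℝ x₁ x₂)‖ ≤ a * ‖x₁ - x₂‖ ^ 2)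
    (hreg : ∀ x₁ ∈ S, ∀ x₂ ∈ S,
      ∀ y ∈ closedBall (midpoint ℝ (F x₁) (F x₂)) (σ * ‖F x₁ - F x₂‖ ^ 2),
        infEDist (midpoint ℝ x₁ x₂) (F ⁻¹' {y}) ≤ κ * edist y (F (midpoint ℝ x₁ x₂)))
    (hκ : κ * (a + σ * M ^ 2) < c) : MidpointStronglyConvex σ (F '' S) := by
  rintro _ ⟨x₁, h₁, rfl⟩ _ ⟨x₂, h₂, rfl⟩ y hy
  rcases eq_or_ne x₁ x₂ with rfl | hne
  · rw [midpoint_self, sub_self, norm_zero, zero_pow two_ne_zero, mul_zero, closedBall_zero,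
      mem_singleton_iff] at hy
    exact hy ▸ mem_image_of_mem F h₁
  have hpos : 0 < ‖x₁ - x₂‖ := norm_sub_pos_iff.2 hne
  have hdist : dist y (F (midpoint ℝ x₁ x₂)) ≤ (a + σ * M ^ 2) * ‖x₁ - x₂‖ ^ 2 :=
    calc dist y (F (midpoint ℝ x₁ x₂))
        ≤ dist y (midpoint ℝ (F x₁) (F x₂))
          + dist (midpoint ℝ (F x₁) (F x₂)) (F (midpoint ℝ x₁ x₂)) := dist_triangle _ _ _
      _ ≤ σ * (M * ‖x₁ - x₂‖) ^ 2 + a * ‖x₁ - x₂‖ ^ 2 := by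
          rw [dist_eq_norm (midpoint ℝ (F x₁) (F x₂))]
          refine add_le_add ((mem_closedBall.1 hy).trans ?_) (ha x₁ h₁ x₂ h₂)
          gcongr
          exact hM.norm_sub_le h₁ h₂
      _ = (a + σ * M ^ 2) * ‖x₁ - x₂‖ ^ 2 := by ring
  have hκdist : κ * dist y (F (midpoint ℝ x₁ x₂)) < c * ‖x₁ - x₂‖ ^ 2 :=
    calc κ * dist y (F (midpoint ℝ x₁ x₂))
        ≤ κ * ((a + σ * M ^ 2) * ‖x₁ - x₂‖ ^ 2) := by gcongr
      _ = κ * (a + σ * M ^ 2) * ‖x₁ - x₂‖ ^ 2 := by ring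
      _ < c * ‖x₁ - x₂‖ ^ 2 := by gcongr
  have hlt : infEDist (midpoint ℝ x₁ x₂) (F ⁻¹' {y}) < ENNReal.ofReal (c * ‖x₁ - x₂‖ ^ 2) := by
    refine (hreg x₁ h₁ x₂ h₂ y hy).trans_lt ?_
    rw [edist_dist, ← ENNReal.ofReal_coe_nnreal, ← ENNReal.ofReal_mul κ.coe_nonneg]
    exact ENNReal.ofReal_lt_ofReal_iff'.2 ⟨hκdist, hκdist.trans_le' (by positivity)⟩
  obtain ⟨x', hx'y, hx'⟩ := infEDist_lt_iff.1 hlt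
  refine ⟨x', hS x₁ h₁ x₂ h₂ ?_, hx'y⟩
  rw [edist_comm, edist_lt_ofReal] at hx'
  exact mem_closedBall.2 hx'.le

lemma closedBall_midpoint_subset_closedBall {p y₁ y₂ : Z} {r : ℝ} (hσ : 0 ≤ σ)
    (h₁ : y₁ ∈ closedBall p r) (h₂ : y₂ ∈ closedBall p r) :
    closedBall (midpoint ℝ y₁ y₂) (σ * ‖y₁ - y₂‖ ^ 2) ⊆ closedBall p (σ * (2 * r) ^ 2 + r) := by
  refine closedBall_subset_closedBall' (add_le_add ?_ ?_)
  · gcongr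
    rw [← dist_eq_norm, two_mul]
    exact (dist_triangle_right y₁ y₂ p).trans (add_le_add h₁ h₂)
  · exact (convex_closedBall p r).midpoint_mem h₁ h₂

lemma exists_eventually_midpointStronglyConvex_image {x₀ : X} {U : Set X} {K : ℝ≥0}
    (hU : U ∈ 𝓝 x₀) (hdiff : ∀ x ∈ U, DifferentiableAt ℝ F x)
    (hK : LipschitzOnWith K (fderiv ℝ F) U) (hκ : MetricallyRegularAt F x₀ κ)
    (hc : κ * K / 8 < c) :
    ∃ σ > 0, ∀ᶠ ρ in 𝓝[>] (0 : ℝ), ∀ S ⊆ closedBall x₀ ρ, UniformlyConvexWith c S →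
      Bornology.IsBounded (F '' S) ∧ MidpointStronglyConvex σ (F '' S) := by
  obtain ⟨M, V, hV, hM⟩ :=
    (C11On.hasStrictFDerivAt ⟨hdiff, K, hK⟩ hU).exists_lipschitzOnWith
  obtain ⟨W, hW, T, hT, hWT⟩ := mem_nhds_prod_iff.1 hκ
  obtain ⟨σ, hσc, hσ⟩ : ∃ σ : ℝ, κ * (K / 8 + σ * M ^ 2) < c ∧ 0 < σ := by
    have hcont : Continuous fun σ : ℝ => κ * (K / 8 + σ * M ^ 2) := by fun_prop
    have hlt : ∀ᶠ σ in 𝓝[>] (0 : ℝ), κ * (K / 8 + σ * M ^ 2) < c :=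
      ((hcont.tendsto' 0 (κ * K / 8) (by ring)).mono_left nhdsWithin_le_nhds).eventually_lt_const hc
    exact (hlt.and self_mem_nhdsWithin).exists
  have hrad : Tendsto (fun ρ : ℝ => σ * (2 * (M * ρ)) ^ 2 + M * ρ) (𝓝 0) (𝓝 0) :=
    Continuous.tendsto' (by fun_prop) 0 0 (by ring)
  refine ⟨σ, hσ, nhdsWithin_le_nhds ?_⟩
  filter_upwards [eventually_closedBall_subset (inter_mem hU (inter_mem hV hW)),
    hrad.eventually (eventually_closedBall_subset hT)] with ρ hρ hρT S hSρ hS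
  have hSU := hSρ.trans hρ
  have himage : MapsTo F S (closedBall (F x₀) (M * ρ)) := fun x hx =>
    (hM.dist_le_mul x (hSU hx).2.1 x₀ (mem_of_mem_nhds hV)).trans
      (mul_le_mul_of_nonneg_left (hSρ hx) M.coe_nonneg)
  refine ⟨isBounded_closedBall.subset himage.image_subset, ?_⟩
  refine (hS.midpointStronglyConvex (isBounded_closedBall.subset hSρ)).image (κ := κ) hσ.le
    (hM.mono fun x hx => (hSU hx).2.1) (fun x₁ h₁ x₂ h₂ => ?_) (fun x₁ h₁ x₂ h₂ y hy => ?_) hσc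
  · exact norm_midpoint_sub_map_midpoint_le hS.2.2.1
      (fun x hx => (hdiff x (hSU hx).1).hasFDerivAt.hasFDerivWithinAt)
      (hK.mono fun x hx => (hSU hx).1) h₁ h₂
  · have hyT : y ∈ T :=
      hρT (closedBall_midpoint_subset_closedBall hσ.le (himage h₁) (himage h₂) hy)
    exact hWT (mk_mem_prod (hSU (hS.2.2.1.midpoint_mem h₁ h₂)).2.2 hyT)

end Image

section ConstrainedMinimum

variable {Y : Type*} [NormedAddCommGroup Y] [NormedSpace ℝ Y] {K : Set (ℝ × Y)} {C : Set Y} {σ : ℝ}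

/- Moving down from the midpoint of `p` and `q` by `σ ‖p - q‖²` stays in `K` and does not change the
second coordinate. -/
lemma MidpointStronglyConvex.mul_sq_norm_sub_le (hK : MidpointStronglyConvex σ K) (hσ : 0 ≤ σ)
    (hC : Convex ℝ C) {m : ℝ} (hm : ∀ q ∈ K, q.2 ∈ C → m ≤ q.1) {p q : ℝ × Y}
    (hp : p ∈ K) (hpC : p.2 ∈ C) (hq : q ∈ K) (hqC : q.2 ∈ C) :
    σ * ‖p - q‖ ^ 2 ≤ midpoint ℝ p.1 q.1 - m := by
  have hmem : midpoint ℝ p q - (σ * ‖p - q‖ ^ 2, 0) ∈ K := by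
    refine hK p hp q hq ?_
    rw [mem_closedBall, dist_self_sub_left, Prod.norm_mk, norm_zero,
      Real.norm_of_nonneg (by positivity), max_eq_left (by positivity)]
  have hfst : (midpoint ℝ p q).1 = midpoint ℝ p.1 q.1 := rfl
  have hsnd : (midpoint ℝ p q).2 = midpoint ℝ p.2 q.2 := rfl
  have hle := hm _ hmem (by
    rw [Prod.snd_sub, hsnd, sub_zero]
    exact hC.midpoint_mem hpC hqC)
  rw [Prod.fst_sub, hfst] at hle
  linarith

lemma MidpointStronglyConvex.exists_isMinOn_fst [CompleteSpace Y] (hK : MidpointStronglyConvex σ K)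
    (hσ : 0 < σ) (hKcl : IsClosed K) (hCcl : IsClosed C) (hC : Convex ℝ C)
    (hne : (K ∩ Prod.snd ⁻¹' C).Nonempty) (hbdd : BddBelow (Prod.fst '' (K ∩ Prod.snd ⁻¹' C))) :
    ∃ p ∈ K ∩ Prod.snd ⁻¹' C, IsMinOn Prod.fst (K ∩ Prod.snd ⁻¹' C) p := by
  set A := K ∩ Prod.snd ⁻¹' C
  set m := sInf (Prod.fst '' A)
  have hm : ∀ q ∈ A, m ≤ q.1 := fun q hq => csInf_le hbdd (mem_image_of_mem _ hq)
  obtain ⟨u, hanti, hum : Tendsto u atTop (𝓝 m), hu⟩ :=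
    exists_seq_tendsto_sInf (hne.image Prod.fst) hbdd
  choose p hpA hpu using hu
  have hdist : ∀ n k, n ≤ k → dist (p n) (p k) ≤ √((u n - m) / σ) := by
    intro n k hnk
    have hsq := hK.mul_sq_norm_sub_le hσ.le hC (fun q hq hqC => hm q ⟨hq, hqC⟩)
      (hpA n).1 (hpA n).2 (hpA k).1 (hpA k).2
    rw [hpu, hpu] at hsq
    have hmid : midpoint ℝ (u n) (u k) ≤ u n := midpoint_le_left.2 (hanti hnk)
    rw [dist_eq_norm]
    refine Real.le_sqrt_of_sq_le ((le_div_iff₀' hσ).2 ?_)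
    linarith
  have hbound : Tendsto (fun n => √((u n - m) / σ)) atTop (𝓝 0) := by
    simpa only [sub_self, zero_div, Real.sqrt_zero] using ((hum.sub_const m).div_const σ).sqrt
  obtain ⟨pbar, hpbar⟩ := cauchySeq_tendsto_of_complete (cauchySeq_of_le_tendsto_0' _ hdist hbound)
  have hval : pbar.1 = m :=
    tendsto_nhds_unique ((continuous_fst.tendsto pbar).comp hpbar) (hum.congr fun n => (hpu n).symm)
  refine ⟨pbar, ?_, fun q hq => hval.trans_le (hm q hq)⟩
  exact (hKcl.inter (hCcl.preimage continuous_snd)).mem_of_tendsto hpbar (.of_forall hpA)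

end ConstrainedMinimum

section Multiplier

variable {Y : Type*} [NormedAddCommGroup Y] [NormedSpace ℝ Y] {K : Set (ℝ × Y)} {C : Set Y}

/-- The dual cone `C⊖` of `C`, a set of continuous linear functionals. -/
def polarCone (C : Set Y) : Set (Y →L[ℝ] ℝ) := {ys | ∀ z ∈ C, ys z ≤ 0}

lemma nonneg_of_forall_smul_mem_of_forall_le {E : Type*} [AddCommGroup E] [Module ℝ E] {C : Set E}
    (hC : ∀ t : ℝ, 0 ≤ t → ∀ z ∈ C, t • z ∈ C) {f : E →ₗ[ℝ] ℝ} {b : ℝ} (hb : ∀ z ∈ C, b ≤ f z)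
    {z : E} (hz : z ∈ C) : 0 ≤ f z := by
  by_contra! hneg
  have hb0 : b ≤ 0 := by simpa using hb _ (hC 0 le_rfl z hz)
  have hle := hb _ (hC ((b - 1) / f z) (div_nonneg_of_nonpos (by linarith) hneg.le) z hz)
  rw [map_smul, smul_eq_mul, div_mul_cancel₀ _ hneg.ne] at hle
  linarith

lemma exists_forall_lt_forall_le_of_le_fst (hK : Convex ℝ K) (hint : (interior K).Nonempty)
    (hC : Convex ℝ C) {m : ℝ} (hm : ∀ q ∈ K, q.2 ∈ C → m ≤ q.1) :
    ∃ (f : StrongDual ℝ (ℝ × Y)) (u : ℝ), (∀ p ∈ interior K, f p < u) ∧ (∀ q ∈ K, f q ≤ u) ∧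
      ∀ z ∈ C, u ≤ f (m, z) := by
  have hdisj : Disjoint (interior K) (Iio m ×ˢ C) :=
    disjoint_left.2 fun q hq hqC => (hm q (interior_subset hq) hqC.2).not_gt hqC.1
  obtain ⟨f, u, hlt, hle⟩ := geometric_hahn_banach_open hK.interior isOpen_interior
    ((convex_Iio m).prod hC) hdisj
  refine ⟨f, u, hlt, fun q hq => ?_, fun z hz => ?_⟩
  · have hsub : closure (interior K) ⊆ {q | f q ≤ u} :=
      closure_minimal (fun p hp => (hlt p hp).le) (isClosed_le f.continuous continuous_const)
    rw [hK.closure_interior_eq_closure_of_nonempty_interior hint] at hsub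
    exact hsub (subset_closure hq)
  · have hsub : closure (Iio m ×ˢ C) ⊆ {q | u ≤ f q} :=
      closure_minimal hle (isClosed_le continuous_const f.continuous)
    rw [closure_prod_eq, closure_Iio] at hsub
    exact hsub (mk_mem_prod self_mem_Iic (subset_closure hz))

/- The interior point `p₀` is the Slater condition: it forces the separating functional to have a
negative first component, by which it is then divided. -/
lemma exists_mem_polarCone_forall_le_add (hK : Convex ℝ K) {p₀ : ℝ × Y} (hp₀ : p₀ ∈ interior K)
    (hC : Convex ℝ C) (hCcone : ∀ t : ℝ, 0 ≤ t → ∀ z ∈ C, t • z ∈ C) (hp₀C : p₀.2 ∈ C) {m : ℝ}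
    (hm : ∀ q ∈ K, q.2 ∈ C → m ≤ q.1) : ∃ ys ∈ polarCone C, ∀ q ∈ K, m ≤ q.1 + ys q.2 := by
  obtain ⟨f, u, hlt, hle, hge⟩ := exists_forall_lt_forall_le_of_le_fst hK ⟨p₀, hp₀⟩ hC hm
  set α : ℝ := f (1, 0)
  set ψ : Y →L[ℝ] ℝ := f.comp (ContinuousLinearMap.inr ℝ ℝ Y)
  have hf : ∀ t z, f (t, z) = t * α + ψ z := fun t z => by
    rw [← smul_eq_mul, ← map_smul, ContinuousLinearMap.comp_apply, ContinuousLinearMap.inr_apply,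
      ← map_add, Prod.smul_mk, smul_zero, smul_eq_mul, mul_one, Prod.mk_add_mk, add_zero, zero_add]
  have hψ : ∀ z ∈ C, 0 ≤ ψ z := fun z hz =>
    nonneg_of_forall_smul_mem_of_forall_le (f := ψ.toLinearMap) hCcone (b := u - m * α)
      (fun z hz => sub_le_iff_le_add'.2 (hf m z ▸ hge z hz)) hz
  have hu : u ≤ m * α := by
    have h0 := hge _ (hCcone 0 le_rfl _ hp₀C)
    rwa [zero_smul, hf, map_zero, add_zero] at h0
  have hα : α < 0 := by
    have hlt₀ : p₀.1 * α + ψ p₀.2 < u := hf _ _ ▸ hlt p₀ hp₀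
    have hψ₀ := hψ _ hp₀C
    have hm₀ := hm p₀ (interior_subset hp₀) hp₀C
    by_contra! hα
    linarith [mul_le_mul_of_nonneg_right hm₀ hα]
  refine ⟨α⁻¹ • ψ, fun z hz => mul_nonpos_of_nonpos_of_nonneg (inv_nonpos.2 hα.le) (hψ z hz),
    fun q hq => ?_⟩
  have hq' : q.1 * α + ψ q.2 ≤ m * α := (hf _ _ ▸ hle q hq).trans hu
  calc m ≤ (q.1 * α + ψ q.2) / α := (le_div_iff_of_neg hα).2 hq'
    _ = q.1 + (α⁻¹ • ψ) q.2 := by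
      rw [add_div, mul_div_cancel_right₀ _ hα.ne, div_eq_inv_mul, smul_apply, smul_eq_mul]

end Multiplier

section SaddlePoint

lemma iInf_iSup_coe_eq_iSup_iInf_coe_of_isSaddlePointOn {E F : Type*} {A : Set E} {B : Set F}
    {L : E → F → ℝ} {a : E} {b : F} (ha : a ∈ A) (hb : b ∈ B) (h : IsSaddlePointOn A B L a b) :
    ⨅ x : A, ⨆ y : B, (L x y : EReal) = ⨆ y : B, ⨅ x : A, (L x y : EReal) := by
  obtain ⟨hinf, hsup⟩ := isSaddlePointOn_value (f := fun x y => (L x y : EReal)) ha hb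
    fun x hx y hy => EReal.coe_le_coe (h x hx y hy)
  simp only [iInf_subtype, iSup_subtype]
  exact hinf.trans hsup.symm

variable {X Y : Type*} [NormedAddCommGroup Y] [NormedSpace ℝ Y]

/-- The Lagrangian `L(ys, x) = φ x + ⟨ys, g x⟩`, with the minimized variable `x` as its first
argument, which is the convention of `IsSaddlePointOn`. -/
def lagrangian (φ : X → ℝ) (g : X → Y) (x : X) (ys : Y →L[ℝ] ℝ) : ℝ := φ x + ys (g x)

lemma exists_isSaddlePointOn_lagrangian [CompleteSpace Y] {φ : X → ℝ} {g : X → Y} {S : Set X}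
    {C : Set Y} {a σ : ℝ} {p₀ : ℝ × Y} (hCcl : IsClosed C) (hC : Convex ℝ C)
    (hCcone : ∀ t : ℝ, 0 ≤ t → ∀ z ∈ C, t • z ∈ C) (hσ : 0 < σ)
    (himage : MidpointStronglyConvex σ ((fun x => (φ x - a, g x)) '' S))
    (hcl : IsClosed ((fun x => (φ x - a, g x)) '' S))
    (hb : Bornology.IsBounded ((fun x => (φ x - a, g x)) '' S))
    (hp₀ : p₀ ∈ interior ((fun x => (φ x - a, g x)) '' S)) (hp₀C : p₀.2 ∈ C) :
    ∃ ystar ∈ polarCone C, ∃ xbar ∈ S ∩ g ⁻¹' C,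
      IsSaddlePointOn S (polarCone C) (lagrangian φ g) xbar ystar := by
  obtain ⟨_, ⟨⟨xbar, hxbar, rfl⟩, hxbarC⟩, hmin⟩ := himage.exists_isMinOn_fst hσ hcl hCcl hC
    ⟨p₀, interior_subset hp₀, hp₀C⟩ (hb.subset inter_subset_left).image_fst.bddBelow
  obtain ⟨ystar, hystar, hle⟩ := exists_mem_polarCone_forall_le_add (himage.convex hσ.le hcl) hp₀
    hC hCcone hp₀C fun q hq hqC => isMinOn_iff.1 hmin q ⟨hq, hqC⟩
  refine ⟨ystar, hystar, xbar, ⟨hxbar, hxbarC⟩, fun x hx y' hy' => ?_⟩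
  have hx' : φ xbar - a ≤ φ x - a + ystar (g x) := hle _ (mem_image_of_mem _ hx)
  calc φ xbar + y' (g xbar) ≤ φ xbar := add_le_of_nonpos_right (hy' _ hxbarC)
    _ ≤ φ x + ystar (g x) := by linarith

end SaddlePoint

theorem zero_duality_gap_and_saddle_point_general
    {X Y : Type*} [NormedAddCommGroup X] [NormedSpace ℝ X] [CompleteSpace X]
    [NormedAddCommGroup Y] [NormedSpace ℝ Y] [CompleteSpace Y] {φ : X → ℝ} {g : X → Y}
    {C : Set Y} (hCcl : IsClosed C) (hC : Convex ℝ C)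
    (hCcone : ∀ t : ℝ, 0 ≤ t → ∀ z ∈ C, t • z ∈ C)
    {x₀ : X} (hx₀ : g x₀ ∈ C) {c r₀ : ℝ} (hr₀ : 0 < r₀)
    {F : X → ℝ × Y} (hF : F = fun x => (φ x - φ x₀, g x))
    (hφ : C11On φ (ball x₀ r₀)) (hg : C11On g (ball x₀ r₀))
    (hsurj : Function.Surjective (fderiv ℝ F x₀))
    (hreg : regBound F x₀ * ENNReal.ofReal (lipOn (fderiv ℝ F) (ball x₀ r₀)) / 8
      < ENNReal.ofReal c) :
    ∃ ρ : ℝ, 0 < ρ ∧ ρ < r₀ ∧ ∀ S : Set X, UniformlyConvexWith c S →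
      x₀ ∈ interior S → S ⊆ closedBall x₀ ρ → IsClosed (F '' S) →
      ((⨅ x : S, ⨆ ys : {y : Y →L[ℝ] ℝ // ∀ z ∈ C, y z ≤ 0},
          ((φ x.1 + ys.1 (g x.1) : ℝ) : EReal)) =
        ⨆ ys : {y : Y →L[ℝ] ℝ // ∀ z ∈ C, y z ≤ 0},
          ⨅ x : S, ((φ x.1 + ys.1 (g x.1) : ℝ) : EReal)) ∧
      ∃ ystar : Y →L[ℝ] ℝ, (∀ z ∈ C, ystar z ≤ 0) ∧
        ∃ xbar ∈ S ∩ g ⁻¹' C,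
          (∀ y' : Y →L[ℝ] ℝ, (∀ z ∈ C, y' z ≤ 0) →
            φ xbar + y' (g xbar) ≤ φ xbar + ystar (g xbar)) ∧
          (∀ x ∈ S, φ xbar + ystar (g xbar) ≤ φ x + ystar (g x)) := by
  have hball : ball x₀ r₀ ∈ 𝓝 x₀ := ball_mem_nhds x₀ hr₀
  have hFC11 : C11On F (ball x₀ r₀) := hF ▸ (hφ.sub_const (φ x₀)).prodMk hg
  have hstrict := hFC11.hasStrictFDerivAt hball
  obtain ⟨κ, hκc, hκ⟩ := exists_metricallyRegularAt_of_regBound_mul_lt hstrict hsurj hreg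
  obtain ⟨σ, hσ, hσρ⟩ := exists_eventually_midpointStronglyConvex_image hball hFC11.1
    (lipschitzOnWith_lipOn hFC11.2) hκ hκc
  obtain ⟨ρ, hρ, hρ₀, hρr₀⟩ := (hσρ.and (Ioo_mem_nhdsGT hr₀)).exists
  refine ⟨ρ, hρ₀, hρr₀, fun S hS hx₀S hSρ hcl => ?_⟩
  obtain ⟨hbdd, himage⟩ := hρ S hSρ hS
  have hint : F x₀ ∈ interior (F '' S) := by
    rw [mem_interior_iff_mem_nhds, ← hstrict.map_nhds_eq_of_surj (LinearMap.range_eq_top.2 hsurj)]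
    exact image_mem_map (mem_interior_iff_mem_nhds.1 hx₀S)
  subst hF
  obtain ⟨ystar, hystar, xbar, hxbar, hsaddle⟩ :=
    exists_isSaddlePointOn_lagrangian hCcl hC hCcone hσ himage hcl hbdd hint hx₀
  exact ⟨iInf_iSup_coe_eq_iSup_iInf_coe_of_isSaddlePointOn hxbar.1 hystar hsaddle,
    ystar, hystar, xbar, hxbar, hsaddle xbar hxbar.1, fun x hx => hsaddle x hx ystar hystar⟩

/-- Corollary 4.4 of the paper: zero Lagrangian duality gap and existence of a
saddle point of the Lagrangian, when `C` is a closed convex cone. -/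
theorem zero_duality_gap_and_saddle_point
    {X Y : Type*} [NormedAddCommGroup X] [NormedSpace ℝ X] [CompleteSpace X]
    [NormedAddCommGroup Y] [NormedSpace ℝ Y] [CompleteSpace Y]
    -- Y is reflexive
    (hrefl : Function.Surjective (NormedSpace.inclusionInDoubleDual ℝ Y))
    (φ : X → ℝ) (g : X → Y)
    -- C is a closed convex cone with apex at the origin
    (C : Set Y) (hCcl : IsClosed C) (hCconv : Convex ℝ C) (hC0 : (0 : Y) ∈ C)
    (hCcone : ∀ t : ℝ, 0 ≤ t → ∀ y ∈ C, t • y ∈ C)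
    (x₀ : X) (hx₀ : g x₀ ∈ C) (c : ℝ) (hc : 0 < c) (r₀ : ℝ) (hr₀ : 0 < r₀)
    (F : X → ℝ × Y) (hF : F = fun x => (φ x - φ x₀, g x))
    (hφdiff : ∀ x ∈ ball x₀ r₀, DifferentiableAt ℝ φ x)
    (hgdiff : ∀ x ∈ ball x₀ r₀, DifferentiableAt ℝ g x)
    (hφlip : ∃ K : ℝ≥0, LipschitzOnWith K (fderiv ℝ φ) (ball x₀ r₀))
    (hglip : ∃ K : ℝ≥0, LipschitzOnWith K (fderiv ℝ g) (ball x₀ r₀))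
    (hsurj : Function.Surjective (fderiv ℝ F x₀))
    (hreg : regBound F x₀ * ENNReal.ofReal (lipOn (fderiv ℝ F) (ball x₀ r₀)) / 8
      < ENNReal.ofReal c) :
    ∃ ρ : ℝ, 0 < ρ ∧ ρ < r₀ ∧ ∀ S : Set X, UniformlyConvexWith c S →
      x₀ ∈ interior S → S ⊆ closedBall x₀ ρ → IsClosed (F '' S) →
      -- the duality gap vanishes: inf sup L = sup inf L over S × C⊖
      ((⨅ x : S, ⨆ ys : {y : Y →L[ℝ] ℝ // ∀ z ∈ C, y z ≤ 0},
          ((φ x.1 + ys.1 (g x.1) : ℝ) : EReal)) =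
        ⨆ ys : {y : Y →L[ℝ] ℝ // ∀ z ∈ C, y z ≤ 0},
          ⨅ x : S, ((φ x.1 + ys.1 (g x.1) : ℝ) : EReal)) ∧
      -- existence of a saddle point (y*_S, x̄_S) ∈ C⊖ × R of the Lagrangian
      ∃ ystar : Y →L[ℝ] ℝ, (∀ z ∈ C, ystar z ≤ 0) ∧
        ∃ xbar ∈ S ∩ g ⁻¹' C,
          (∀ y' : Y →L[ℝ] ℝ, (∀ z ∈ C, y' z ≤ 0) →
            φ xbar + y' (g xbar) ≤ φ xbar + ystar (g xbar)) ∧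
          (∀ x ∈ S, φ xbar + ystar (g xbar) ≤ φ x + ystar (g x)) :=
  zero_duality_gap_and_saddle_point_general hCcl hCconv hCcone hx₀ hr₀ hF ⟨hφdiff, hφlip⟩
    ⟨hgdiff, hglip⟩ hsurj hreg
end

section
/- Let f : X → Y be a mapping between metric spaces, x₀ ∈ X, and suppose there exist positive reals δ and σ such that f(B(x, r)) ⊇ B(f(x), σr) for all x ∈ B(x₀, δ) and all r ∈ [0, δ]. Then for every set S ⊆ B(x₀, δ): (a) f(int S) ⊆ int f(S); and (b) consequently, if f is continuous, f⁻¹(y) ∩ S ⊆ fr S for every y ∈ fr f(S), where fr denotes the topological boundary. -/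
open Metric Set
open Filter Topology

section TopologicalSpace

variable {X Y : Type*} [TopologicalSpace X] [TopologicalSpace Y] {f : X → Y} {s : Set X}

theorem image_interior_subset_interior_image (hf : ∀ x ∈ interior s, 𝓝 (f x) ≤ map f (𝓝 x)) :
    f '' interior s ⊆ interior (f '' s) := by
  rintro _ ⟨x, hx, rfl⟩
  have hs : s ∈ 𝓝 x := mem_interior_iff_mem_nhds.1 hx
  exact mem_interior_iff_mem_nhds.2 (hf x hx (image_mem_map hs))

theorem preimage_frontier_image_inter_subset_frontier
    (hf : f '' interior s ⊆ interior (f '' s)) : f ⁻¹' frontier (f '' s) ∩ s ⊆ frontier s :=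
  fun _ ⟨hfx, hxs⟩ ↦ ⟨subset_closure hxs, fun hx ↦ hfx.2 (hf (mem_image_of_mem f hx))⟩

end TopologicalSpace

theorem nhds_le_map_nhds_of_image_closedBall_mem_nhds {X Y : Type*} [PseudoMetricSpace X]
    [TopologicalSpace Y] {f : X → Y} {x : X} {δ : ℝ} (hδ : 0 < δ)
    (hf : ∀ r ∈ Ioc 0 δ, f '' closedBall x r ∈ 𝓝 (f x)) : 𝓝 (f x) ≤ map f (𝓝 x) := by
  refine (nhds_basis_closedBall.map f).ge_iff.2 fun ε hε ↦ ?_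
  have hmin : f '' closedBall x (min ε δ) ∈ 𝓝 (f x) :=
    hf _ ⟨lt_min hε hδ, min_le_right ε δ⟩
  exact mem_of_superset hmin (image_mono (closedBall_subset_closedBall (min_le_left ε δ)))

theorem nhds_le_map_nhds_of_closedBall_subset_image {X Y : Type*} [PseudoMetricSpace X]
    [PseudoMetricSpace Y] {f : X → Y} {x : X} {δ σ : ℝ} (hδ : 0 < δ) (hσ : 0 < σ)
    (hf : ∀ r ∈ Ioc 0 δ, closedBall (f x) (σ * r) ⊆ f '' closedBall x r) :
    𝓝 (f x) ≤ map f (𝓝 x) :=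
  nhds_le_map_nhds_of_image_closedBall_mem_nhds hδ fun r hr ↦
    mem_of_superset (closedBall_mem_nhds (f x) (mul_pos hσ hr.1)) (hf r hr)

theorem openAtLinearRate_interior_image_general {X Y : Type*} [PseudoMetricSpace X]
    [PseudoMetricSpace Y] {f : X → Y} {x₀ : X} {δ σ : ℝ} (hδ : 0 < δ) (hσ : 0 < σ)
    (hop : ∀ x ∈ closedBall x₀ δ, ∀ r ∈ Ioc 0 δ, closedBall (f x) (σ * r) ⊆ f '' closedBall x r)
    {S : Set X} (hS : interior S ⊆ closedBall x₀ δ) :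
    f '' interior S ⊆ interior (f '' S) ∧ f ⁻¹' frontier (f '' S) ∩ S ⊆ frontier S := by
  have himage : f '' interior S ⊆ interior (f '' S) :=
    image_interior_subset_interior_image fun x hx ↦
      nhds_le_map_nhds_of_closedBall_subset_image hδ hσ (hop x (hS hx))
  exact ⟨himage, preimage_frontier_image_inter_subset_frontier himage⟩

/-- Remark 2.6 (ii) of the paper: a mapping that is open at a linear rate (in the
simplified form valid around a continuity point) maps interiors into interiors
of images; consequently preimages of boundary points of the image meet `S` only
at boundary points of `S`. -/
theorem openAtLinearRate_interior_image
    {X Y : Type*} [MetricSpace X] [MetricSpace Y] (f : X → Y) (x₀ : X)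
    (δ σ : ℝ) (hδ : 0 < δ) (hσ : 0 < σ)
    (hop : ∀ x ∈ closedBall x₀ δ, ∀ r ∈ Icc (0 : ℝ) δ,
      closedBall (f x) (σ * r) ⊆ f '' closedBall x r)
    (S : Set X) (hS : S ⊆ closedBall x₀ δ) :
    f '' interior S ⊆ interior (f '' S) ∧
      (Continuous f →
        ∀ y ∈ frontier (f '' S), {x : X | f x = y} ∩ S ⊆ frontier S) := by
  obtain ⟨himage, hfrontier⟩ := openAtLinearRate_interior_image_general hδ hσ
    (fun x hx r hr ↦ hop x hx r (Ioc_subset_Icc_self hr)) (interior_subset.trans hS)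
  refine ⟨himage, ?_⟩
  rintro - _ hy x ⟨rfl, hxS⟩
  exact hfrontier ⟨hy, hxS⟩
end
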